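/- Let N be a monotonic max-sum GNN with L layers over a finite colour set Col, let R be a finite set of relations, let f : R × ℝ^{δ_L} × ℝ^{δ_L} → ℝ be such that f(R, ·, ·) is monotonically increasing for each R ∈ R, and let t_f ∈ ℝ be a threshold. Let G and G' be finite Col-edge-coloured graphs with vertex sets V and V', decidable edge relations E^c and E'^c, and initial labels λ_0 : V → ℝ^{δ_0} and λ'_0 : V' → ℝ^{δ_0} whose entries are all non-negative. Suppose ι : V → V' is injective, (u, v) ∈ E^c implies (ι u, ι v) ∈ E'^c for all c, u, v, and λ_0(v)[j] ≤ λ'_0(ι v)[j] for all v, j. Then for all u, v ∈ V and every R ∈ R: if f(R, λ_L(u), λ_L(v)) ≥ t_f then f(R, λ'_L(ι u), λ'_L(ι v)) ≥ t_f. (Hence the set of facts predicted by (N, f) on G is contained, via ι, in the set of facts predicted on G'; this is the monotonicity of the induced dataset transformation T_{N,f} under dataset inclusion.) -/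

import Mathlib

/-- Sum of the `min k |S|` largest elements of the multiset `S`. -/
noncomputable def maxKSum (k : ℕ) (S : Multiset ℝ) : ℝ :=
  ((S.sort (· ≤ ·)).reverse.take k).sum

/-- `max-k-sum` where the aggregation parameter `k` may be a natural number or `∞`;
`max-∞-sum` sums all elements. -/
noncomputable def maxKSumE (k : ℕ∞) (S : Multiset ℝ) : ℝ :=
  maxKSum (min k (Multiset.card S : ℕ∞)).toNat S

/-- A max-sum GNN with `L` layers over a colour set `Col` and dimensions `δ 0, …, δ L`:
matrices `A ℓ`, `B ℓ c ∈ ℝ^{δ(ℓ+1) × δ ℓ}`, bias vectors `bias ℓ ∈ ℝ^{δ(ℓ+1)}`,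
activation functions `act ℓ : ℝ → ℝ` and aggregation parameters `agg ℓ ∈ ℕ ∪ {∞}`. -/
structure MaxSumGNN (Col : Type) (L : ℕ) (δ : ℕ → ℕ) where
  A : ∀ ℓ : Fin L, Matrix (Fin (δ (ℓ.1 + 1))) (Fin (δ ℓ.1)) ℝ
  B : ∀ ℓ : Fin L, Col → Matrix (Fin (δ (ℓ.1 + 1))) (Fin (δ ℓ.1)) ℝ
  bias : ∀ ℓ : Fin L, Fin (δ (ℓ.1 + 1)) → ℝ
  act : Fin L → ℝ → ℝ
  agg : Fin L → ℕ∞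

/-- A max-sum GNN is monotonic if all entries of all matrices `A ℓ`, `B ℓ c` are
non-negative and every activation function is monotonically increasing with
non-negative range. -/
def MaxSumGNN.Monotonic {Col : Type} {L : ℕ} {δ : ℕ → ℕ} (N : MaxSumGNN Col L δ) : Prop :=
  (∀ ℓ i j, 0 ≤ N.A ℓ i j) ∧ (∀ ℓ c i j, 0 ≤ N.B ℓ c i j) ∧
  (∀ ℓ, Monotone (N.act ℓ) ∧ ∀ x, 0 ≤ N.act ℓ x)

/-- The vertex labels `λ_ℓ(v)` computed by a max-sum GNN applied to a finite
`Col`-edge-coloured graph with edge relations `E c` and initial labels `lam0`: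
`λ_ℓ(v) = σ_ℓ(b_ℓ + A_ℓ λ_{ℓ-1}(v) + Σ_c B_ℓ^c a_ℓ^c(v))` where the `j`-th
component of `a_ℓ^c(v)` is the `max-k_ℓ-sum` of `⦃λ_{ℓ-1}(u)[j] : (v,u) ∈ E^c⦄`. -/
noncomputable def MaxSumGNN.label {Col : Type} [Fintype Col] {L : ℕ} {δ : ℕ → ℕ}
    (N : MaxSumGNN Col L δ) {V : Type} [Fintype V]
    (E : Col → V → V → Prop) [∀ c u v, Decidable (E c u v)]
    (lam0 : V → Fin (δ 0) → ℝ) :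
    (ℓ : ℕ) → ℓ ≤ L → V → Fin (δ ℓ) → ℝ
  | 0, _, v => lam0 v
  | (ℓ + 1), hℓ, v => fun i =>
      N.act ⟨ℓ, hℓ⟩ (N.bias ⟨ℓ, hℓ⟩ i
        + (N.A ⟨ℓ, hℓ⟩).mulVec (N.label E lam0 ℓ (Nat.le_of_succ_le hℓ) v) i
        + ∑ c : Col, (N.B ⟨ℓ, hℓ⟩ c).mulVec
            (fun j => maxKSumE (N.agg ⟨ℓ, hℓ⟩)
              ((Finset.univ.filter (fun u => E c v u)).val.map
                (fun u => N.label E lam0 ℓ (Nat.le_of_succ_le hℓ) u j))) i)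

/-!
For a multiset of non-negative reals, max-`k`-sum is the largest sum of a sub-multiset with at most
`k` elements. Domination of the labels along `ι` therefore passes through the aggregation: since `ι`
keeps the neighbours of `v` apart, the summands chosen at `v` are dominated, element by element, by
a competitor for the maximum at `ι v`. Everything else in a layer is monotone, so domination of the
labels, and finally of the scores, follows by induction on the layers.
-/

theorem forall₂_le_take_length_of_sublist {α : Type*} [Preorder α] {l m : List α}
    (hl : l.Pairwise (· ≥ ·)) (hm : m.Sublist l) :
    List.Forall₂ (· ≤ ·) m (l.take m.length) := by
  induction l generalizing m with
  | nil => simp [List.sublist_nil.mp hm]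
  | cons a l ih =>
    cases m with
    | nil => simp
    | cons b m =>
      obtain ⟨ha, hl⟩ := List.pairwise_cons.mp hl
      have hba : b ≤ a := by
        rcases List.mem_cons.mp (hm.subset List.mem_cons_self) with rfl | hb
        · exact le_rfl
        · exact ha b hb
      exact .cons hba (ih hl hm.tail)

theorem sum_le_sum_take_of_sublist {α : Type*} [AddCommMonoid α] [Preorder α]
    [IsOrderedAddMonoid α] {l m : List α} {k : ℕ} (hl : l.Pairwise (· ≥ ·))
    (hl₀ : ∀ a ∈ l, 0 ≤ a) (hm : m.Sublist l) (hk : m.length ≤ k) :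
    m.sum ≤ (l.take k).sum :=
  calc m.sum ≤ (l.take m.length).sum := (forall₂_le_take_length_of_sublist hl hm).sum_le_sum
    _ ≤ (l.take k).sum :=
      (List.take_sublist_take_left hk).sum_le_sum fun a ha => hl₀ a (List.mem_of_mem_take ha)

theorem exists_le_card_le_sum_eq_maxKSum (k : ℕ) (S : Multiset ℝ) :
    ∃ T ≤ S, T.card ≤ k ∧ T.sum = maxKSum k S := by
  refine ⟨((S.sort (· ≤ ·)).reverse.take k : List ℝ), ?_, by simp, by simp [maxKSum]⟩
  calc (((S.sort (· ≤ ·)).reverse.take k : List ℝ) : Multiset ℝ)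
      ≤ ((S.sort (· ≤ ·)).reverse : List ℝ) := (List.take_sublist _ _).subperm
    _ = S := by rw [Multiset.coe_reverse, Multiset.sort_eq]

theorem sum_le_maxKSum {k : ℕ} {S T : Multiset ℝ} (hS : ∀ a ∈ S, 0 ≤ a) (hTS : T ≤ S)
    (hk : T.card ≤ k) : T.sum ≤ maxKSum k S := by
  have hsub : (T.toList : Multiset ℝ) ≤ ((S.sort (· ≤ ·)).reverse : List ℝ) := by
    rwa [Multiset.coe_toList, Multiset.coe_reverse, Multiset.sort_eq]
  obtain ⟨m, hmT, hmS⟩ := Multiset.coe_le.mp hsub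
  rw [← Multiset.sum_toList, ← hmT.sum_eq]
  refine sum_le_sum_take_of_sublist ?_ ?_ hmS ?_
  · exact List.pairwise_reverse.mpr (Multiset.pairwise_sort S (· ≤ ·))
  · simpa using hS
  · rwa [hmT.length_eq, Multiset.length_toList]

theorem le_toNat_min_natCast_iff {k : ℕ∞} {m n : ℕ} :
    m ≤ (min k (n : ℕ∞)).toNat ↔ (m : ℕ∞) ≤ k ∧ m ≤ n := by
  have hfin : min k (n : ℕ∞) ≠ ⊤ := ne_top_of_le_ne_top (ENat.natCast_ne_top n) (min_le_right _ _)
  rw [← Nat.cast_le (α := ℕ∞), ENat.natCast_toNat hfin, le_min_iff, Nat.cast_le]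

theorem exists_le_card_le_sum_eq_maxKSumE (k : ℕ∞) (S : Multiset ℝ) :
    ∃ T ≤ S, (T.card : ℕ∞) ≤ k ∧ T.sum = maxKSumE k S := by
  obtain ⟨T, hTS, hT, hsum⟩ := exists_le_card_le_sum_eq_maxKSum (min k (S.card : ℕ∞)).toNat S
  exact ⟨T, hTS, (le_toNat_min_natCast_iff.mp hT).1, hsum⟩

theorem sum_le_maxKSumE {k : ℕ∞} {S T : Multiset ℝ} (hS : ∀ a ∈ S, 0 ≤ a) (hTS : T ≤ S)
    (hk : (T.card : ℕ∞) ≤ k) : T.sum ≤ maxKSumE k S :=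
  sum_le_maxKSum hS hTS (le_toNat_min_natCast_iff.mpr ⟨hk, Multiset.card_le_card hTS⟩)

theorem maxKSumE_le_maxKSumE_of_rel_of_le (k : ℕ∞) {S T S' : Multiset ℝ}
    (hST : Multiset.Rel (· ≤ ·) S T) (hTS' : T ≤ S') (hS' : ∀ a ∈ S', 0 ≤ a) :
    maxKSumE k S ≤ maxKSumE k S' := by
  obtain ⟨P, hPS, hPk, hPsum⟩ := exists_le_card_le_sum_eq_maxKSumE k S
  obtain ⟨U, rfl⟩ := Multiset.le_iff_exists_add.mp hPS
  obtain ⟨Q, W, hPQ, -, rfl⟩ := Multiset.rel_add_left.mp hST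
  have hQk : (Q.card : ℕ∞) ≤ k := by rwa [← Multiset.card_eq_card_of_rel hPQ]
  calc maxKSumE k (P + U) = P.sum := hPsum.symm
    _ ≤ Q.sum := Multiset.sum_le_sum_of_rel_le hPQ
    _ ≤ maxKSumE k S' := sum_le_maxKSumE hS' ((Multiset.le_add_right Q W).trans hTS') hQk

theorem maxKSumE_map_le_maxKSumE_map {α β : Type*} (k : ℕ∞) {s : Finset α} {t : Finset β}
    {φ : α → β} {f : α → ℝ} {g : β → ℝ} (hmaps : Set.MapsTo φ s t) (hinj : Set.InjOn φ s)
    (hg : ∀ b ∈ t, 0 ≤ g b) (hfg : ∀ a ∈ s, f a ≤ g (φ a)) :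
    maxKSumE k (s.val.map f) ≤ maxKSumE k (t.val.map g) := by
  have hrel : Multiset.Rel (· ≤ ·) (s.val.map f) ((s.val.map φ).map g) := by
    rw [Multiset.map_map]
    exact Multiset.rel_map.mpr (Multiset.rel_refl_of_refl_on hfg)
  have hsub : s.val.map φ ≤ t.val := by
    refine (Multiset.le_iff_subset (Multiset.Nodup.map_on hinj s.nodup)).mpr fun b hb => ?_
    obtain ⟨a, ha, rfl⟩ := Multiset.mem_map.mp hb
    exact hmaps ha
  exact maxKSumE_le_maxKSumE_of_rel_of_le k hrel (Multiset.map_le_map hsub)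
    (Multiset.forall_mem_map_iff.mpr hg)

theorem mulVec_le_mulVec_of_nonneg {m n α : Type*} [Fintype n] [Semiring α] [PartialOrder α]
    [IsOrderedRing α] {A : Matrix m n α} (hA : ∀ i j, 0 ≤ A i j) {x y : n → α} (hxy : x ≤ y) :
    A.mulVec x ≤ A.mulVec y :=
  fun i => dotProduct_le_dotProduct_of_nonneg_left hxy (hA i)

namespace MaxSumGNN.Monotonic

variable {Col : Type} [Fintype Col] {L : ℕ} {δ : ℕ → ℕ} {N : MaxSumGNN Col L δ}
  {V V' : Type} [Fintype V] [Fintype V']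
  {E : Col → V → V → Prop} [∀ c u v, Decidable (E c u v)]
  {E' : Col → V' → V' → Prop} [∀ c u v, Decidable (E' c u v)]
  {lam0 : V → Fin (δ 0) → ℝ} {lam0' : V' → Fin (δ 0) → ℝ} {ι : V → V'}

theorem label_nonneg (hN : N.Monotonic) (hlam0 : ∀ v j, 0 ≤ lam0 v j) {ℓ : ℕ} (hℓ : ℓ ≤ L)
    (v : V) (i : Fin (δ ℓ)) : 0 ≤ N.label E lam0 ℓ hℓ v i := by
  cases ℓ with
  | zero => exact hlam0 v i
  | succ ℓ => exact (hN.2.2 ⟨ℓ, hℓ⟩).2 _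

theorem label_le_label (hN : N.Monotonic) (hlam0' : ∀ v j, 0 ≤ lam0' v j)
    (hι : ∀ c v, Set.InjOn ι {u | E c v u}) (hE : ∀ c u v, E c u v → E' c (ι u) (ι v))
    (hle : ∀ v j, lam0 v j ≤ lam0' (ι v) j) {ℓ : ℕ} (hℓ : ℓ ≤ L) (v : V) :
    N.label E lam0 ℓ hℓ v ≤ N.label E' lam0' ℓ hℓ (ι v) := by
  induction ℓ generalizing v with
  | zero => exact hle v
  | succ ℓ ih =>
    obtain ⟨hA, hB, hact⟩ := hN
    have ih := ih (Nat.le_of_succ_le hℓ)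
    intro i
    refine (hact ⟨ℓ, hℓ⟩).1 (add_le_add (add_le_add le_rfl ?_) (Finset.sum_le_sum fun c _ => ?_))
    · exact mulVec_le_mulVec_of_nonneg (hA ⟨ℓ, hℓ⟩) (ih v) i
    · refine mulVec_le_mulVec_of_nonneg (hB ⟨ℓ, hℓ⟩ c) (fun j => ?_) i
      refine maxKSumE_map_le_maxKSumE_map (N.agg ⟨ℓ, hℓ⟩) (φ := ι) ?_ ?_ ?_ fun u _ => ih u j
      · intro u hu
        simpa using hE c v u (by simpa using hu)
      · simpa using hι c v
      · exact fun u' _ => label_nonneg ⟨hA, hB, hact⟩ hlam0' _ u' j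

end MaxSumGNN.Monotonic

theorem maxSumGNN_scoring_monotone_general
    {Col : Type} [Fintype Col] {L : ℕ} {δ : ℕ → ℕ}
    {N : MaxSumGNN Col L δ} (hN : N.Monotonic) {R α : Type*} [Preorder α]
    {f : R → (Fin (δ L) → ℝ) → (Fin (δ L) → ℝ) → α}
    (hf : ∀ (r : R) (h h' t t' : Fin (δ L) → ℝ),
      (∀ i, 0 ≤ h i ∧ h i ≤ h' i) → (∀ i, 0 ≤ t i ∧ t i ≤ t' i) →
      f r h t ≤ f r h' t')
    {V V' : Type} [Fintype V] [Fintype V']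
    {E : Col → V → V → Prop} [∀ c u v, Decidable (E c u v)]
    {E' : Col → V' → V' → Prop} [∀ c u v, Decidable (E' c u v)]
    {lam0 : V → Fin (δ 0) → ℝ} {lam0' : V' → Fin (δ 0) → ℝ}
    (hlam0 : ∀ v j, 0 ≤ lam0 v j) (hlam0' : ∀ v j, 0 ≤ lam0' v j)
    {ι : V → V'} (hι : ∀ c v, Set.InjOn ι {u | E c v u})
    (hE : ∀ c u v, E c u v → E' c (ι u) (ι v))
    (hle : ∀ v j, lam0 v j ≤ lam0' (ι v) j) (u v : V) (r : R) :
    f r (N.label E lam0 L le_rfl u) (N.label E lam0 L le_rfl v) ≤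
      f r (N.label E' lam0' L le_rfl (ι u)) (N.label E' lam0' L le_rfl (ι v)) := by
  have hlabel (w : V) (i : Fin (δ L)) : 0 ≤ N.label E lam0 L le_rfl w i ∧
      N.label E lam0 L le_rfl w i ≤ N.label E' lam0' L le_rfl (ι w) i :=
    ⟨hN.label_nonneg hlam0 le_rfl w i, hN.label_le_label hlam0' hι hE hle le_rfl w i⟩
  exact hf r _ _ _ _ (hlabel u) (hlabel v)

/-- a monotonic max-sum GNN combined with a scoring function that
is monotonically increasing for each relation yields a monotone dataset
transformation: under an injective homomorphism of input graphs, every fact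
scored above the threshold on `G` is also scored above the threshold on `G'`. -/
theorem maxSumGNN_scoring_monotone
    {Col : Type} [Fintype Col] {L : ℕ} {δ : ℕ → ℕ}
    (N : MaxSumGNN Col L δ) (hN : N.Monotonic)
    (R : Type) [Fintype R]
    (f : R → (Fin (δ L) → ℝ) → (Fin (δ L) → ℝ) → ℝ)
    (hf : ∀ (r : R) (h h' t t' : Fin (δ L) → ℝ),
      (∀ i, 0 ≤ h i ∧ h i ≤ h' i) → (∀ i, 0 ≤ t i ∧ t i ≤ t' i) →
      f r h t ≤ f r h' t')
    (tf : ℝ)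
    {V V' : Type} [Fintype V] [Fintype V']
    (E : Col → V → V → Prop) [∀ c u v, Decidable (E c u v)]
    (E' : Col → V' → V' → Prop) [∀ c u v, Decidable (E' c u v)]
    (lam0 : V → Fin (δ 0) → ℝ) (lam0' : V' → Fin (δ 0) → ℝ)
    (hlam0 : ∀ v j, 0 ≤ lam0 v j) (hlam0' : ∀ v j, 0 ≤ lam0' v j)
    (ι : V → V') (hι : Function.Injective ι)
    (hE : ∀ c u v, E c u v → E' c (ι u) (ι v))
    (hle : ∀ v j, lam0 v j ≤ lam0' (ι v) j) :
    ∀ (u v : V) (r : R),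
      tf ≤ f r (N.label E lam0 L le_rfl u) (N.label E lam0 L le_rfl v) →
      tf ≤ f r (N.label E' lam0' L le_rfl (ι u)) (N.label E' lam0' L le_rfl (ι v)) := by
  intro u v r hscore
  exact hscore.trans (maxSumGNN_scoring_monotone_general hN hf hlam0 hlam0'
    (fun _ _ => hι.injOn) hE hle u v r)
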